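/- For any U, V, W ∈ M₃(ℂ), 6·D(U,V,W) = 60·∫_{S⁵} (ξ*Uξ)·(ξ*Vξ)·(ξ*Wξ) dμ(ξ) − 2·(tr(UV)tr(W) + tr(UW)tr(V) + tr(VW)tr(U)). -/

import Mathlib

/-!
Both sides are trilinear in `(U, V, W)` and can be written through traces of products. The integral
is `1/60` times the sum, over the permutations of three letters, of the products of traces along
cycles (`integral_eq`), and `6 D(U, V, W)` is the same sum weighted with signs (`mixedDisc_eq`).
The two sums differ exactly by `2 (tr(UV) tr W + tr(UW) tr V + tr(VW) tr U)`.

The integral formula rests only on the unitary invariance of the uniform measure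
(`sphere_integral_unitary`) and its total mass. Expanding the quadratic forms leaves the moments
`∫ conj(x_a) x_b conj(x_c) x_d conj(x_e) x_f`. Diagonal unitaries kill those where `(b, d, f)` is
not a rearrangement of `(a, c, e)`, and permutation matrices reduce the others to
`α = ∫ |x₀|⁶`, `β = ∫ |x₀|⁴|x₁|²`, `γ = ∫ |x₀|²|x₁|²|x₂|²`. Invariance under one rotation mixing
two coordinates gives `α = 3 β` and `β = 2 γ`, while `‖x‖ = 1` gives `3 α + 18 β + 6 γ = 1`, so
`γ = 1/60`.
-/

open MeasureTheory Metric
open scoped BigOperators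

noncomputable section

/-- The mixed discriminant of `r` complex `r × r` matrices. -/
def mixedDisc {r : ℕ} (A : Fin r → Matrix (Fin r) (Fin r) ℂ) : ℂ :=
  (1 / (Nat.factorial r : ℂ)) *
    ∑ σ : Equiv.Perm (Fin r), Matrix.det (Matrix.of fun i k => A (σ i) i k)

/-- `ξ*Uξ = ∑_{p,q} conj(ξ^p) U_{pq} ξ^q`. -/
def quadForm {r : ℕ} (U : Matrix (Fin r) (Fin r) ℂ) (ξ : Fin r → ℂ) : ℂ :=
  ∑ p, ∑ q, (starRingEnd ℂ) (ξ p) * U p q * ξ q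

instance (r : ℕ) : MeasurableSpace (EuclideanSpace ℂ (Fin r)) := borel _
instance (r : ℕ) : BorelSpace (EuclideanSpace ℂ (Fin r)) := ⟨rfl⟩

/-- The normalized rotation-invariant (uniform) probability measure on the unit sphere
`S^{2r-1} = {ξ ∈ ℂ^r : ‖ξ‖ = 1}`. -/
def sphereUniform (r : ℕ) : Measure (sphere (0 : EuclideanSpace ℂ (Fin r)) 1) :=
  ((Measure.addHaar : Measure (EuclideanSpace ℂ (Fin r))).toSphere Set.univ)⁻¹ •
    (Measure.addHaar : Measure (EuclideanSpace ℂ (Fin r))).toSphere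

/-! ### Unitary invariance of the uniform measure -/

section Invariance
variable {E : Type*} [NormedAddCommGroup E] [NormedSpace ℝ E]

/-- The push-forward of `μ` under `g` is again Haar, hence a multiple of `μ`; the multiple is `1`
because `g` preserves the unit ball. -/
theorem addHaar_measurePreserving [FiniteDimensional ℝ E] [MeasurableSpace E] [BorelSpace E]
    (μ : Measure E) [μ.IsAddHaarMeasure] (g : E ≃ₗᵢ[ℝ] E) :
    MeasurePreserving g μ μ := by
  refine ⟨g.continuous.measurable, ?_⟩
  have h : (Measure.map g μ).IsAddHaarMeasure :=
    g.toContinuousLinearEquiv.isAddHaarMeasure_map μ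
  have hc := Measure.isAddLeftInvariant_eq_smul (Measure.map g μ) μ
  set c := Measure.addHaarScalarFactor (Measure.map g μ) μ
  have hb : (Measure.map g μ) (ball 0 1) = μ (ball 0 1) := by
    rw [Measure.map_apply g.continuous.measurable measurableSet_ball]
    congr 1
    ext x
    simp
  have h0 : μ (ball 0 1) ≠ 0 := (measure_ball_pos μ 0 one_pos).ne'
  have h1 : μ (ball 0 1) ≠ ⊤ := measure_ball_lt_top.ne
  rw [hc, Measure.smul_apply] at hb
  have : (c : ENNReal) = 1 := by
    have h2 : (c : ENNReal) * μ (ball 0 1) = 1 * μ (ball 0 1) := by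
      rw [one_mul]; exact hb
    exact (ENNReal.mul_left_inj h0 h1).1 h2
  rw [hc]
  have hc1 : c = 1 := by exact_mod_cast this
  rw [hc1, one_smul]

/-- The self-map of the unit sphere induced by a linear isometric automorphism. -/
def sphereMap (g : E ≃ₗᵢ[ℝ] E) (ξ : sphere (0 : E) 1) : sphere (0 : E) 1 :=
  ⟨g ξ, by simp⟩

theorem sphereMap_continuous (g : E ≃ₗᵢ[ℝ] E) : Continuous (sphereMap g) :=
  (g.continuous.comp continuous_subtype_val).subtype_mk _

theorem sphereMap_injective (g : E ≃ₗᵢ[ℝ] E) : Function.Injective (sphereMap g) := by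
  intro a b hab
  have h : g a = g b := congrArg Subtype.val hab
  exact Subtype.ext (g.injective h)

open scoped Pointwise in
theorem toSphere_measurePreserving [FiniteDimensional ℝ E] [MeasurableSpace E] [BorelSpace E]
    (μ : Measure E) [μ.IsAddHaarMeasure] (g : E ≃ₗᵢ[ℝ] E) :
    MeasurePreserving (sphereMap g) μ.toSphere μ.toSphere := by
  refine ⟨(sphereMap_continuous g).measurable, ?_⟩
  ext s hs
  have hm := (sphereMap_continuous g).measurable
  rw [Measure.map_apply hm hs, Measure.toSphere_apply' _ hs, Measure.toSphere_apply' _ (hm hs)]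
  congr 1
  have hg := (addHaar_measurePreserving μ g).measure_preimage_equiv (f := g.toHomeomorph.toMeasurableEquiv)
    (Set.Ioo (0 : ℝ) 1 • ((↑) '' s : Set E))
  rw [← hg]
  congr 1
  ext x
  simp only [Set.mem_smul, Set.mem_image, Set.mem_preimage]
  constructor
  · rintro ⟨t, ht, _, ⟨ξ, hξ, rfl⟩, rfl⟩
    exact ⟨t, ht, _, ⟨sphereMap g ξ, hξ, rfl⟩, (map_smul g t (ξ : E)).symm⟩
  · rintro ⟨t, ht, _, ⟨ξ, hξ, rfl⟩, hx⟩
    refine ⟨t, ht, _, ⟨sphereMap g.symm ξ, ?_, rfl⟩, ?_⟩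
    · have : sphereMap g (sphereMap g.symm ξ) = ξ := by
        ext; simp [sphereMap]
      simpa [this] using hξ
    · have : g x = t • (ξ : E) := hx.symm
      apply g.injective
      rw [this]
      simp [sphereMap]

end Invariance

instance : IsProbabilityMeasure (sphereUniform 3) := by
  constructor
  rw [sphereUniform, Measure.smul_apply, smul_eq_mul]
  apply ENNReal.inv_mul_cancel
  · exact fun h => Measure.toSphere_ne_zero _ (Measure.measure_univ_eq_zero.1 h)
  · exact measure_ne_top _ _

/-- Integrals against `sphereUniform 3` are invariant under unitary substitutions. No regularity of
`f` is needed, as the substitution is a measurable embedding of the sphere. -/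
theorem sphere_integral_unitary (M : Matrix (Fin 3) (Fin 3) ℂ) (hM : M.conjTranspose * M = 1)
    (f : (Fin 3 → ℂ) → ℂ) :
    ∫ ξ, f (M.mulVec (fun p => (ξ : EuclideanSpace ℂ (Fin 3)) p)) ∂(sphereUniform 3)
      = ∫ ξ, f (fun p => (ξ : EuclideanSpace ℂ (Fin 3)) p) ∂(sphereUniform 3) := by
  have hn : ∀ x : EuclideanSpace ℂ (Fin 3), ‖Matrix.toEuclideanLin M x‖ = ‖x‖ := by
    intro x
    have h := Matrix.toEuclideanLin_conjTranspose_eq_adjoint M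
    have h2 : inner ℂ (Matrix.toEuclideanLin M x) (Matrix.toEuclideanLin M x) = inner ℂ x x := by
      rw [← LinearMap.adjoint_inner_left, ← h]
      congr 1
      ext i
      simp [Matrix.toLpLin_apply, Matrix.mulVec_mulVec, hM]
    rw [inner_self_eq_norm_sq_to_K, inner_self_eq_norm_sq_to_K] at h2
    have h3 : ‖Matrix.toEuclideanLin M x‖ ^ 2 = ‖x‖ ^ 2 := by exact_mod_cast h2
    exact (pow_left_inj₀ (norm_nonneg _) (norm_nonneg _) two_ne_zero).1 h3
  let g0 : EuclideanSpace ℂ (Fin 3) →ₗᵢ[ℂ] EuclideanSpace ℂ (Fin 3) :=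
    ⟨Matrix.toEuclideanLin M, hn⟩
  let g1 := g0.toLinearIsometryEquiv rfl
  let g : EuclideanSpace ℂ (Fin 3) ≃ₗᵢ[ℝ] EuclideanSpace ℂ (Fin 3) :=
    ⟨g1.toLinearEquiv.restrictScalars ℝ, g1.norm_map⟩
  have hp := (toSphere_measurePreserving
    (Measure.addHaar : Measure (EuclideanSpace ℂ (Fin 3))) g)
  have hemb : MeasurableEmbedding (sphereMap g) := by
    exact ((sphereMap_continuous g).isClosedEmbedding (sphereMap_injective g)).measurableEmbedding
  have := hp.integral_comp hemb
    (fun ξ => f (fun p => (ξ : EuclideanSpace ℂ (Fin 3)) p))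
  rw [sphereUniform, integral_smul_measure, integral_smul_measure, ← this]
  rfl

/-! ### Sixth moments of the coordinates -/

/-- The degree `(3, 3)` monomial `conj(x_a) x_b conj(x_c) x_d conj(x_e) x_f`. -/
def mono (x : Fin 3 → ℂ) (a b c d e f : Fin 3) : ℂ :=
  (starRingEnd ℂ (x a) * x b) * (starRingEnd ℂ (x c) * x d) * (starRingEnd ℂ (x e) * x f)

/-- The integral of the monomial `mono` over the unit sphere of `ℂ³`. -/
def mom (a b c d e f : Fin 3) : ℂ :=
  ∫ ξ, mono (fun p => (ξ : EuclideanSpace ℂ (Fin 3)) p) a b c d e f ∂(sphereUniform 3)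

theorem mono_integrable (a b c d e f : Fin 3) :
    Integrable (fun ξ : sphere (0 : EuclideanSpace ℂ (Fin 3)) 1 =>
      mono (fun p => (ξ : EuclideanSpace ℂ (Fin 3)) p) a b c d e f) (sphereUniform 3) := by
  apply Continuous.integrable_of_hasCompactSupport
  · unfold mono
    fun_prop
  · exact HasCompactSupport.of_compactSpace _

theorem quadForm_mul (U V W : Matrix (Fin 3) (Fin 3) ℂ) (x : Fin 3 → ℂ) :
    quadForm U x * quadForm V x * quadForm W x =
      ∑ a, ∑ c, ∑ e, ∑ b, ∑ d, ∑ f, (U a b * V c d * W e f) * mono x a b c d e f := by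
  unfold quadForm mono
  rw [Finset.sum_mul_sum, Finset.sum_mul]
  refine Finset.sum_congr rfl fun a _ => ?_
  rw [Finset.sum_mul]
  refine Finset.sum_congr rfl fun c _ => ?_
  rw [Finset.mul_sum]
  refine Finset.sum_congr rfl fun e _ => ?_
  rw [Finset.sum_mul_sum, Finset.sum_mul]
  refine Finset.sum_congr rfl fun b _ => ?_
  rw [Finset.sum_mul]
  refine Finset.sum_congr rfl fun d _ => ?_
  rw [Finset.mul_sum]
  refine Finset.sum_congr rfl fun f _ => ?_
  ring

theorem integral_quadForm (U V W : Matrix (Fin 3) (Fin 3) ℂ) :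
    ∫ ξ, quadForm U (fun p => (ξ : EuclideanSpace ℂ (Fin 3)) p) *
            quadForm V (fun p => (ξ : EuclideanSpace ℂ (Fin 3)) p) *
            quadForm W (fun p => (ξ : EuclideanSpace ℂ (Fin 3)) p) ∂(sphereUniform 3)
      = ∑ a, ∑ c, ∑ e, ∑ b, ∑ d, ∑ f, (U a b * V c d * W e f) * mom a b c d e f := by
  have hi := fun (k : ℂ) a b c d e f => (mono_integrable a b c d e f).const_mul k
  simp_rw [quadForm_mul]
  rw [integral_finsetSum _ fun a _ => ?_]
  swap
  · repeat' (refine integrable_finsetSum _ fun _ _ => ?_)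
    exact hi _ _ _ _ _ _ _
  refine Finset.sum_congr rfl fun a _ => ?_
  rw [integral_finsetSum _ fun c _ => ?_]
  swap
  · repeat' (refine integrable_finsetSum _ fun _ _ => ?_)
    exact hi _ _ _ _ _ _ _
  refine Finset.sum_congr rfl fun c _ => ?_
  rw [integral_finsetSum _ fun e _ => ?_]
  swap
  · repeat' (refine integrable_finsetSum _ fun _ _ => ?_)
    exact hi _ _ _ _ _ _ _
  refine Finset.sum_congr rfl fun e _ => ?_
  rw [integral_finsetSum _ fun b _ => ?_]
  swap
  · repeat' (refine integrable_finsetSum _ fun _ _ => ?_)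
    exact hi _ _ _ _ _ _ _
  refine Finset.sum_congr rfl fun b _ => ?_
  rw [integral_finsetSum _ fun d _ => ?_]
  swap
  · repeat' (refine integrable_finsetSum _ fun _ _ => ?_)
    exact hi _ _ _ _ _ _ _
  refine Finset.sum_congr rfl fun d _ => ?_
  rw [integral_finsetSum _ fun f _ => hi _ _ _ _ _ _ _]
  refine Finset.sum_congr rfl fun f _ => ?_
  rw [integral_const_mul]
  rfl

/-- The exponent `n`, as a natural number, such that multiplying the `i`-th coordinate by `I`
multiplies `mono x a b c d e f` by `I ^ n`; each conjugated factor contributes `3`, since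
`conj I = I ^ 3`. -/
def phaseExp (i a b c d e f : Fin 3) : ℕ :=
  (if a = i then 3 else 0) + (if b = i then 1 else 0) + (if c = i then 3 else 0)
    + (if d = i then 1 else 0) + (if e = i then 3 else 0) + (if f = i then 1 else 0)

/-- Invariance under the diagonal unitary multiplying the `i`-th coordinate by `I`. A fourth root of
unity suffices: the numbers of plain and conjugated factors `x_i` differ by at most `3`. -/
theorem mom_eq_zero (i a b c d e f : Fin 3) (h : ¬ phaseExp i a b c d e f % 4 = 0) :
    mom a b c d e f = 0 := by
  let u : Fin 3 → ℂ := fun p => Complex.I ^ (if p = i then 1 else 0)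
  have hu : ∀ p, starRingEnd ℂ (u p) = Complex.I ^ (if p = i then 3 else 0) := by
    intro p
    by_cases hp : p = i <;> simp [u, hp]
  have hM : (Matrix.diagonal u).conjTranspose * Matrix.diagonal u = 1 := by
    rw [Matrix.diagonal_conjTranspose, Matrix.diagonal_mul_diagonal, ← Matrix.diagonal_one]
    congr 1
    funext p
    by_cases hp : p = i <;> simp [u, hp]
  have key := sphere_integral_unitary _ hM (fun x => mono x a b c d e f)
  have hm : ∀ x : Fin 3 → ℂ, mono ((Matrix.diagonal u).mulVec x) a b c d e f
      = Complex.I ^ phaseExp i a b c d e f * mono x a b c d e f := by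
    intro x
    simp only [mono, Matrix.mulVec_diagonal, map_mul, hu, phaseExp, pow_add]
    simp only [u]
    ring
  simp_rw [hm] at key
  rw [integral_const_mul] at key
  change _ * mom a b c d e f = mom a b c d e f at key
  have hne : Complex.I ^ phaseExp i a b c d e f ≠ 1 := by
    rw [Complex.I_pow_eq_pow_mod]
    have hlt := Nat.mod_lt (phaseExp i a b c d e f) (show 4 > 0 by norm_num)
    generalize phaseExp i a b c d e f % 4 = n at *
    interval_cases n
    · exact absurd rfl h
    · intro hh; simpa using congrArg Complex.im hh
    · intro hh
      have := congrArg Complex.re hh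
      norm_num at this
    · intro hh
      have := congrArg Complex.im hh
      norm_num at this
  have h0 : (Complex.I ^ phaseExp i a b c d e f - 1) * mom a b c d e f = 0 := by
    rw [sub_mul, key]; ring
  exact (mul_eq_zero.1 h0).resolve_left (sub_ne_zero.2 hne)

/-- The triple `(b, d, f)` is a rearrangement of `(a, c, e)`. -/
def IsMatch (a b c d e f : Fin 3) : Prop :=
  (b = a ∧ d = c ∧ f = e) ∨ (b = a ∧ d = e ∧ f = c) ∨ (b = c ∧ d = a ∧ f = e) ∨
  (b = c ∧ d = e ∧ f = a) ∨ (b = e ∧ d = a ∧ f = c) ∨ (b = e ∧ d = c ∧ f = a)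

instance (a b c d e f : Fin 3) : Decidable (IsMatch a b c d e f) := by
  unfold IsMatch; infer_instance

set_option maxRecDepth 100000 in
theorem isMatch_of_phaseExp : ∀ a b c d e f : Fin 3,
    (∀ i, phaseExp i a b c d e f % 4 = 0) → IsMatch a b c d e f := by
  decide +kernel

/-- Moments vanish unless plain and conjugated indices match, in which case they are moments of
the squared moduli `|x_a|²|x_c|²|x_e|²`. -/
theorem mom_eq (a b c d e f : Fin 3) :
    mom a b c d e f = if IsMatch a b c d e f then mom a a c c e e else 0 := by
  split_ifs with h
  · unfold mom
    congr 1
    funext ξ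
    rcases h with ⟨rfl, rfl, rfl⟩ | ⟨rfl, rfl, rfl⟩ | ⟨rfl, rfl, rfl⟩ | ⟨rfl, rfl, rfl⟩ |
      ⟨rfl, rfl, rfl⟩ | ⟨rfl, rfl, rfl⟩ <;> unfold mono <;> ring
  · by_contra hne
    exact h (isMatch_of_phaseExp a b c d e f fun i => by
      by_contra hi
      exact hne (mom_eq_zero i a b c d e f hi))

/-- Invariance under permutation matrices. -/
theorem mom_perm (σ : Equiv.Perm (Fin 3)) (a c e : Fin 3) :
    mom (σ a) (σ a) (σ c) (σ c) (σ e) (σ e) = mom a a c c e e := by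
  have hM : (σ.permMatrix ℂ).conjTranspose * σ.permMatrix ℂ = 1 := by
    rw [Matrix.conjTranspose_permMatrix, ← Matrix.permMatrix_mul]
    simp
  have key := sphere_integral_unitary _ hM (fun x => mono x a a c c e e)
  simp_rw [Matrix.permMatrix_mulVec] at key
  exact key

theorem mom_swap12 (a c e : Fin 3) : mom c c a a e e = mom a a c c e e := by
  unfold mom mono
  congr 1; funext ξ; ring

theorem mom_swap23 (a c e : Fin 3) : mom a a e e c c = mom a a c c e e := by
  unfold mom mono
  congr 1; funext ξ; ring

/-! ### Linear relations between the three basic moments -/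

/-- A rotation in the first two coordinates; the triple `3, 4, 5` keeps its entries rational. -/
def rotM : Matrix (Fin 3) (Fin 3) ℂ := !![3/5, 4/5, 0; -4/5, 3/5, 0; 0, 0, 1]

theorem rotM_unitary : rotM.conjTranspose * rotM = 1 := by
  ext i j
  fin_cases i <;> fin_cases j <;>
    simp [rotM, Matrix.mul_apply, Fin.sum_univ_three, Complex.conj_ofNat] <;> norm_num

/-- The rank-one projection `v vᵀ` for `v = (3/5, 4/5, 0)`. -/
def rotP : Matrix (Fin 3) (Fin 3) ℂ := !![9/25, 12/25, 0; 12/25, 16/25, 0; 0, 0, 0]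

/-- The projection onto the last coordinate. -/
def projTwo : Matrix (Fin 3) (Fin 3) ℂ := !![0, 0, 0; 0, 0, 0; 0, 0, 1]

theorem quadForm_rotP (x : Fin 3 → ℂ) :
    quadForm rotP x = starRingEnd ℂ (rotM.mulVec x 0) * rotM.mulVec x 0 := by
  simp [quadForm, rotP, rotM, Fin.sum_univ_three, Matrix.mulVec, dotProduct, Complex.conj_ofNat]
  ring

theorem quadForm_projTwo (x : Fin 3 → ℂ) :
    quadForm projTwo x = starRingEnd ℂ (rotM.mulVec x 2) * rotM.mulVec x 2 := by
  simp [quadForm, projTwo, rotM, Fin.sum_univ_three, Matrix.mulVec, dotProduct]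

/-- Up to permutation of coordinates only `∫ |x₀|⁶`, `∫ |x₀|⁴|x₁|²` and `∫ |x₀|²|x₁|²|x₂|²`
occur. -/
theorem mom_diag (a c e : Fin 3) : mom a a c c e e =
    if a = c ∧ c = e then mom 0 0 0 0 0 0
    else if a = c ∨ a = e ∨ c = e then mom 0 0 0 0 1 1 else mom 0 0 1 1 2 2 := by
  have hpair : ∀ a e : Fin 3, a ≠ e → mom a a a a e e = mom 0 0 0 0 1 1 := by
    intro a e hae
    obtain ⟨σ, rfl, rfl⟩ : ∃ σ : Equiv.Perm (Fin 3), σ 0 = a ∧ σ 1 = e := by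
      revert a e; decide
    exact mom_perm σ 0 0 1
  split_ifs with h1 h2
  · obtain ⟨rfl, rfl⟩ := h1
    obtain ⟨σ, rfl⟩ : ∃ σ : Equiv.Perm (Fin 3), σ 0 = a := ⟨Equiv.swap 0 a, by simp⟩
    exact mom_perm σ 0 0 0
  · rcases h2 with rfl | rfl | rfl
    · exact hpair _ _ fun h => h1 ⟨rfl, h⟩
    · rw [mom_swap23]; exact hpair _ _ fun h => h1 ⟨h, h.symm⟩
    · rw [mom_swap12, mom_swap23]
      exact hpair _ _ fun h => h1 ⟨h.symm, rfl⟩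
  · obtain ⟨σ, rfl, rfl, rfl⟩ :
        ∃ σ : Equiv.Perm (Fin 3), σ 0 = a ∧ σ 1 = c ∧ σ 2 = e := by
      revert a c e; decide
    exact mom_perm σ 0 1 2

/-- The number of permutations of the three places taking `(a, c, e)` to `(b, d, f)`. -/
def wick (a b c d e f : Fin 3) : ℕ :=
  (if b = a ∧ d = c ∧ f = e then 1 else 0) + (if b = a ∧ d = e ∧ f = c then 1 else 0) +
  (if b = c ∧ d = a ∧ f = e then 1 else 0) + (if b = c ∧ d = e ∧ f = a then 1 else 0) +
  (if b = e ∧ d = a ∧ f = c then 1 else 0) + (if b = e ∧ d = c ∧ f = a then 1 else 0)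

theorem wick_eq : ∀ a b c d e f : Fin 3, wick a b c d e f =
    if IsMatch a b c d e f then
      (if a = c ∧ c = e then 6 else if a = c ∨ a = e ∨ c = e then 2 else 1)
    else 0 := by
  decide +kernel

/-- Contracting with `wick` sums over the six ways to pair the indices. -/
theorem sum_wick (a c e : Fin 3) (G : Fin 3 → Fin 3 → Fin 3 → ℂ) :
    ∑ b, ∑ d, ∑ f, G b d f * (wick a b c d e f : ℂ)
      = G a c e + G a e c + G c a e + G c e a + G e a c + G e c a := by
  have hδ : ∀ p q r : Fin 3, ∑ b, ∑ d, ∑ f,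
      G b d f * (if b = p ∧ d = q ∧ f = r then 1 else 0) = G p q r := by
    intro p q r
    simp [ite_and, Finset.sum_ite_irrel]
  unfold wick
  push_cast
  simp only [mul_add, Finset.sum_add_distrib, hδ]

/-- Every moment is a multiple of `wick`, the factor depending only on which of `a`, `c`, `e`
coincide; a value `6` or `2` of `wick` is divided out. The factors are shown to be equal in
`moments`. -/
theorem mom_classify (a b c d e f : Fin 3) : mom a b c d e f =
    (if a = c ∧ c = e then mom 0 0 0 0 0 0 / 6
      else if a = c ∨ a = e ∨ c = e then mom 0 0 0 0 1 1 / 2 else mom 0 0 1 1 2 2)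
      * (wick a b c d e f : ℂ) := by
  rw [mom_eq, mom_diag, wick_eq]
  split_ifs <;> simp

theorem integral_quadForm_wick (U V W : Matrix (Fin 3) (Fin 3) ℂ) :
    ∫ ξ, quadForm U (fun p => (ξ : EuclideanSpace ℂ (Fin 3)) p) *
            quadForm V (fun p => (ξ : EuclideanSpace ℂ (Fin 3)) p) *
            quadForm W (fun p => (ξ : EuclideanSpace ℂ (Fin 3)) p) ∂(sphereUniform 3)
      = ∑ a, ∑ c, ∑ e, (if a = c ∧ c = e then mom 0 0 0 0 0 0 / 6
          else if a = c ∨ a = e ∨ c = e then mom 0 0 0 0 1 1 / 2 else mom 0 0 1 1 2 2) *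
        (U a a * V c c * W e e + U a a * V c e * W e c + U a c * V c a * W e e
          + U a c * V c e * W e a + U a e * V c a * W e c + U a e * V c c * W e a) := by
  rw [integral_quadForm]
  refine Finset.sum_congr rfl fun a _ => Finset.sum_congr rfl fun c _ =>
    Finset.sum_congr rfl fun e _ => ?_
  rw [← sum_wick a c e (fun b d f => U a b * V c d * W e f)]
  simp_rw [Finset.mul_sum]
  refine Finset.sum_congr rfl fun b _ => Finset.sum_congr rfl fun d _ =>
    Finset.sum_congr rfl fun f _ => ?_
  rw [mom_classify]
  ring

/-- Compares `∫ |x₀|⁶` with `∫ |(3x₀ + 4x₁)/5|⁶`. -/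
theorem mom_rel_six : mom 0 0 0 0 0 0 = 3 * mom 0 0 0 0 1 1 := by
  have h1 := integral_quadForm_wick rotP rotP rotP
  have h2 := sphere_integral_unitary rotM rotM_unitary (fun x => mono x 0 0 0 0 0 0)
  simp_rw [quadForm_rotP] at h1
  change _ = mom 0 0 0 0 0 0 at h2
  unfold mono at h2
  rw [h2] at h1
  generalize hα : mom 0 0 0 0 0 0 = α at *
  generalize hβ : mom 0 0 0 0 1 1 = β at *
  generalize hγ : mom 0 0 1 1 2 2 = γ at *
  simp [Fin.sum_univ_three, rotP] at h1
  linear_combination (15625/10800 : ℂ) * h1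

/-- Compares `∫ |x₀|⁴|x₂|²` with `∫ |(3x₀ + 4x₁)/5|⁴|x₂|²`. -/
theorem mom_rel_four : mom 0 0 0 0 1 1 = 2 * mom 0 0 1 1 2 2 := by
  have hp : mom 0 0 0 0 2 2 = mom 0 0 0 0 1 1 := by
    rw [mom_diag]; rfl
  have h1 := integral_quadForm_wick rotP rotP projTwo
  have h2 := sphere_integral_unitary rotM rotM_unitary (fun x => mono x 0 0 0 0 2 2)
  simp_rw [quadForm_rotP, quadForm_projTwo] at h1
  change _ = mom 0 0 0 0 2 2 at h2
  unfold mono at h2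
  rw [h2, hp] at h1
  generalize hα : mom 0 0 0 0 0 0 = α at *
  generalize hβ : mom 0 0 0 0 1 1 = β at *
  generalize hγ : mom 0 0 1 1 2 2 = γ at *
  simp [Fin.sum_univ_three, rotP, projTwo] at h1
  linear_combination (625/288 : ℂ) * h1

/-- The integral of `(|x₀|² + |x₁|² + |x₂|²)³ = 1`. -/
theorem mom_rel_one : 3 * mom 0 0 0 0 0 0 + 18 * mom 0 0 0 0 1 1 + 6 * mom 0 0 1 1 2 2 = 1 := by
  have h1 := integral_quadForm_wick 1 1 1
  have hq : ∀ ξ : sphere (0 : EuclideanSpace ℂ (Fin 3)) 1,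
      quadForm 1 (fun p => (ξ : EuclideanSpace ℂ (Fin 3)) p) = 1 := by
    intro ξ
    have hξ : ‖(ξ : EuclideanSpace ℂ (Fin 3))‖ ^ 2 = 1 := by simp
    rw [EuclideanSpace.norm_sq_eq] at hξ
    have : quadForm 1 (fun p => (ξ : EuclideanSpace ℂ (Fin 3)) p)
        = ((∑ p, ‖(ξ : EuclideanSpace ℂ (Fin 3)) p‖ ^ 2 : ℝ) : ℂ) := by
      simp [quadForm, Matrix.one_apply, Complex.conj_mul']
    rw [this, hξ, Complex.ofReal_one]
  simp_rw [hq] at h1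
  generalize hα : mom 0 0 0 0 0 0 = α at *
  generalize hβ : mom 0 0 0 0 1 1 = β at *
  generalize hγ : mom 0 0 1 1 2 2 = γ at *
  simp [Fin.sum_univ_three, Matrix.one_apply] at h1
  linear_combination -h1

theorem moments :
    mom 0 0 0 0 0 0 / 6 = 1 / 60 ∧ mom 0 0 0 0 1 1 / 2 = 1 / 60 ∧ mom 0 0 1 1 2 2 = 1 / 60 := by
  have hγ : mom 0 0 1 1 2 2 = 1 / 60 := by
    linear_combination (1/60 : ℂ) * mom_rel_one - (1/20 : ℂ) * mom_rel_six - (27/60 : ℂ) * mom_rel_four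
  rw [mom_rel_six, mom_rel_four, hγ]
  norm_num

/-! ### Both sides in terms of traces -/

/-- Wick-type formula: `60` times the integral is the sum over the six permutations of three
places of the products of traces along their cycles. -/
theorem integral_eq (U V W : Matrix (Fin 3) (Fin 3) ℂ) :
    60 * ∫ ξ, quadForm U (fun p => (ξ : EuclideanSpace ℂ (Fin 3)) p) *
            quadForm V (fun p => (ξ : EuclideanSpace ℂ (Fin 3)) p) *
            quadForm W (fun p => (ξ : EuclideanSpace ℂ (Fin 3)) p) ∂(sphereUniform 3)
      = U.trace * V.trace * W.trace + (U * V).trace * W.trace + (U * W).trace * V.trace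
        + (V * W).trace * U.trace + (U * V * W).trace + (U * W * V).trace := by
  obtain ⟨hα, hβ, hγ⟩ := moments
  rw [integral_quadForm_wick, hα, hβ, hγ]
  simp only [ite_self]
  simp only [Matrix.trace, Matrix.diag_apply, Matrix.mul_apply, Fin.sum_univ_three]
  ring

theorem sum_perm_three (g : Fin 3 → Fin 3 → Fin 3 → ℂ) :
    ∑ σ : Equiv.Perm (Fin 3), g (σ 0) (σ 1) (σ 2)
      = g 0 1 2 + g 0 2 1 + g 1 0 2 + g 1 2 0 + g 2 0 1 + g 2 1 0 := by
  have hu : (Finset.univ : Finset (Equiv.Perm (Fin 3))) =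
    {1, Equiv.swap 1 2, Equiv.swap 0 1, Equiv.swap 0 1 * Equiv.swap 1 2,
      Equiv.swap 1 2 * Equiv.swap 0 1, Equiv.swap 0 2} := by decide
  rw [hu]
  rw [Finset.sum_insert (by decide), Finset.sum_insert (by decide), Finset.sum_insert (by decide),
    Finset.sum_insert (by decide), Finset.sum_insert (by decide), Finset.sum_singleton]
  simp only [← add_assoc]
  rfl

/-- The signed analogue of `integral_eq`: transpositions enter with sign `-1`. -/
theorem mixedDisc_eq (U V W : Matrix (Fin 3) (Fin 3) ℂ) :
    6 * mixedDisc ![U, V, W]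
      = U.trace * V.trace * W.trace - (U * V).trace * W.trace - (U * W).trace * V.trace
        - (V * W).trace * U.trace + (U * V * W).trace + (U * W * V).trace := by
  have h := sum_perm_three fun p q r => Matrix.det
    (Matrix.of ![![U, V, W] p 0, ![U, V, W] q 1, ![U, V, W] r 2])
  have h2 : ∀ σ : Equiv.Perm (Fin 3),
      (Matrix.of fun i k => ![U, V, W] (σ i) i k) =
        Matrix.of ![![U, V, W] (σ 0) 0, ![U, V, W] (σ 1) 1, ![U, V, W] (σ 2) 2] := by
    intro σ
    ext i k
    fin_cases i <;> rfl
  unfold mixedDisc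
  simp_rw [h2, h]
  have h6 : (6 : ℂ) * (1 / (Nat.factorial 3 : ℂ)) = 1 := by norm_num [Nat.factorial]
  rw [← mul_assoc, h6, one_mul]
  simp only [Matrix.det_fin_three, Matrix.of_apply, Matrix.cons_val]
  simp only [Matrix.trace, Matrix.diag_apply, Matrix.mul_apply, Fin.sum_univ_three]
  ring

theorem stmt11 (U V W : Matrix (Fin 3) (Fin 3) ℂ) :
    6 * mixedDisc ![U, V, W]
      = 60 * ∫ ξ, quadForm U (fun p => (ξ : EuclideanSpace ℂ (Fin 3)) p) *
            quadForm V (fun p => (ξ : EuclideanSpace ℂ (Fin 3)) p) *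
            quadForm W (fun p => (ξ : EuclideanSpace ℂ (Fin 3)) p) ∂(sphereUniform 3)
        - 2 * (Matrix.trace (U * V) * Matrix.trace W
            + Matrix.trace (U * W) * Matrix.trace V
            + Matrix.trace (V * W) * Matrix.trace U) := by
  rw [integral_eq, mixedDisc_eq]
  ring
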